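/- Let Γ be a connected finite simple graph with each vertex group a nontrivial primary cyclic group (of prime power order). Then the graph product W_Γ is freely indecomposable. -/

import Mathlib

universe u v w

/-- A group is freely indecomposable if it is nontrivial and not isomorphic to
a free product of two nontrivial groups. -/
def FreelyIndecomposable (G : Type*) [Group G] : Prop :=
  Nontrivial G ∧ ∀ (A : Type v) (B : Type w) [Group A] [Group B],
    Nontrivial A → Nontrivial B → IsEmpty (G ≃* Monoid.Coprod A B)

/-- The set of defining relators of a graph product. -/
def graphProductRels {V : Type*} (Γ : SimpleGraph V) (G : V → Type u)
    [∀ v, Group (G v)] : Subgroup (Monoid.CoprodI G) :=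
  Subgroup.normalClosure
    {x | ∃ (v w : V) (a : G v) (b : G w), Γ.Adj v w ∧
      x = Monoid.CoprodI.of a * Monoid.CoprodI.of b *
        (Monoid.CoprodI.of a)⁻¹ * (Monoid.CoprodI.of b)⁻¹}

instance {V : Type*} (Γ : SimpleGraph V) (G : V → Type u) [∀ v, Group (G v)] :
    (graphProductRels Γ G).Normal :=
  Subgroup.normalClosure_normal

/-- The graph product of the groups `G v` over the graph `Γ`. -/
def GraphProduct {V : Type*} (Γ : SimpleGraph V) (G : V → Type u)
    [∀ v, Group (G v)] :=
  Monoid.CoprodI G ⧸ graphProductRels Γ G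

instance {V : Type*} (Γ : SimpleGraph V) (G : V → Type u) [∀ v, Group (G v)] :
    Group (GraphProduct Γ G) :=
  inferInstanceAs (Group (Monoid.CoprodI G ⧸ graphProductRels Γ G))

/-!
Cyclic reduction shows that an element of finite order in `A ∗ B` is conjugate into `A` or into `B`,
so one of the two retractions onto `A` and `B` kills it, and only one does unless it is trivial.
A group is not the union of two proper subgroups, so a torsion subgroup is killed as a whole by one
of the retractions. Two nontrivial torsion subgroups that commute elementwise are killed by the same
one, because their product is again a torsion group. If `A ∗ B` were a graph product over a
connected graph of nontrivial torsion groups, all vertex groups would therefore be killed by the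
same retraction. As they generate, that retraction would be trivial, and so would `A` or `B`.
-/

open Monoid

section CyclicReduction

variable {ι : Type*} {M : ι → Type*}

section Monoid

variable [∀ i, Monoid (M i)] {i j : ι}

theorem exists_neWord_prod_eq_pow_succ (hij : i ≠ j) (w : CoprodI.NeWord M i j) (n : ℕ) :
    ∃ w' : CoprodI.NeWord M i j, w'.prod = w.prod ^ (n + 1) := by
  induction n with
  | zero => exact ⟨w, (pow_one _).symm⟩
  | succ n ih =>
    obtain ⟨w', hw'⟩ := ih
    exact ⟨w'.append hij.symm w, by rw [CoprodI.NeWord.append_prod, hw', ← pow_succ]⟩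

theorem neWord_prod_ne_one (w : CoprodI.NeWord M i j) : w.prod ≠ 1 := by
  classical
  intro h
  have hempty : w.toWord = CoprodI.Word.empty :=
    CoprodI.Word.equiv.symm.injective (h.trans CoprodI.Word.prod_empty.symm)
  exact w.toList_ne_nil (congrArg CoprodI.Word.toList hempty)

theorem not_isOfFinOrder_neWord_prod (hij : i ≠ j) (w : CoprodI.NeWord M i j) :
    ¬IsOfFinOrder w.prod := by
  rw [isOfFinOrder_iff_pow_eq_one]
  rintro ⟨n, hn, hpow⟩
  obtain ⟨w', hw'⟩ := exists_neWord_prod_eq_pow_succ hij w (n - 1)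
  rw [Nat.sub_add_cancel hn, hpow] at hw'
  exact neWord_prod_ne_one w' hw'

end Monoid

variable [∀ i, Group (M i)]

/-- Conjugation by the first letter moves it to the end, where it merges with the last one. -/
theorem exists_shorter_isConj_prod {w : CoprodI.Word M} {i : ι} {a b : M i}
    {l : List (Σ i, M i)} (hw : w.toList = ⟨i, a⟩ :: (l ++ [⟨i, b⟩])) :
    ∃ w' : CoprodI.Word M, w'.toList.length < w.toList.length ∧ IsConj w'.prod w.prod := by
  have hne := w.ne_one
  have hchain := w.chain_ne
  rw [hw] at hne hchain
  have hconj : IsConj ((l.map fun p ↦ CoprodI.of p.2).prod * CoprodI.of (b * a)) w.prod :=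
    isConj_iff.2 ⟨CoprodI.of a, by simp [CoprodI.Word.prod, hw, mul_assoc]⟩
  by_cases hba : b * a = 1
  · refine ⟨⟨l, fun p hp ↦ hne p (by simp [hp]), hchain.tail.left_of_append⟩, by simp [hw], ?_⟩
    simpa [CoprodI.Word.prod, hba] using hconj
  · refine ⟨⟨l ++ [⟨i, b * a⟩], ?_, ?_⟩, by simp [hw], ?_⟩
    · grind
    · have := hchain.tail
      simp only [List.tail_cons, List.isChain_append] at this ⊢
      simpa using this
    · simpa [CoprodI.Word.prod] using hconj

theorem neWord_prod_eq_of_or_exists_shorter_isConj {i : ι} (w : CoprodI.NeWord M i i) :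
    (∃ m : M i, w.prod = CoprodI.of m) ∨
      ∃ w' : CoprodI.Word M, w'.toList.length < w.toList.length ∧ IsConj w'.prod w.prod := by
  cases w with
  | singleton m hm => exact .inl ⟨m, CoprodI.NeWord.prod_singleton m hm⟩
  | append w₁ hne w₂ =>
    obtain ⟨l₁, h₁⟩ := List.head?_eq_some_iff.1 w₁.toList_head?
    obtain ⟨l₂, h₂⟩ := List.getLast?_eq_some_iff.1 w₂.toList_getLast?
    have htoList : (w₁.append hne w₂).toWord.toList =
        ⟨i, w₁.head⟩ :: (l₁ ++ l₂ ++ [⟨i, w₂.last⟩]) := by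
      simp [CoprodI.NeWord.toWord, h₁, h₂]
    exact .inr (exists_shorter_isConj_prod htoList)

theorem exists_isConj_of_or_exists_isConj_neWord_prod [Nonempty ι] (x : CoprodI M) :
    (∃ (i : ι) (m : M i), IsConj (CoprodI.of m) x) ∨
      ∃ (i j : ι) (w : CoprodI.NeWord M i j), i ≠ j ∧ IsConj w.prod x := by
  classical
  obtain ⟨w, rfl⟩ := CoprodI.Word.equiv.symm.surjective x
  change (∃ (i : ι) (m : M i), IsConj (CoprodI.of m) w.prod) ∨
    ∃ (i j : ι) (w' : CoprodI.NeWord M i j), i ≠ j ∧ IsConj w'.prod w.prod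
  induction hn : w.toList.length using Nat.strong_induction_on generalizing w with
  | _ n ih =>
    subst hn
    rcases eq_or_ne w CoprodI.Word.empty with rfl | hempty
    · exact .inl ⟨Classical.arbitrary ι, 1, by simp⟩
    obtain ⟨i, j, w, rfl⟩ := CoprodI.NeWord.of_word w hempty
    rcases ne_or_eq i j with hij | rfl
    · exact .inr ⟨i, j, w, hij, .refl _⟩
    rcases neWord_prod_eq_of_or_exists_shorter_isConj w with ⟨m, hm⟩ | ⟨w', hlt, hconj⟩
    · exact .inl ⟨i, m, hm ▸ .refl _⟩
    · exact (ih _ hlt w' rfl).imp (fun ⟨k, m, h⟩ ↦ ⟨k, m, h.trans hconj⟩)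
        fun ⟨k, l, u, hkl, h⟩ ↦ ⟨k, l, u, hkl, h.trans hconj⟩

theorem exists_isConj_of_of_isOfFinOrder [Nonempty ι] {x : CoprodI M} (hx : IsOfFinOrder x) :
    ∃ (i : ι) (m : M i), IsConj (CoprodI.of m) x := by
  refine (exists_isConj_of_or_exists_isConj_neWord_prod x).resolve_right ?_
  rintro ⟨i, j, w, hij, hconj⟩
  exact not_isOfFinOrder_neWord_prod hij w (hconj.symm.isOfFinOrder hx)

end CyclicReduction

section BinaryCoproduct

/-- The pair `A`, `B` as a family indexed by `Bool`, which turns the binary coproduct into an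
indexed one. The universe lifts allow the two groups to live in different universes. -/
def BoolFamily (A : Type v) (B : Type w) : Bool → Type (max v w)
  | true => ULift.{w} A
  | false => ULift.{v} B

variable {A : Type v} {B : Type w} [Group A] [Group B]

instance : ∀ b : Bool, Group (BoolFamily A B b)
  | true => inferInstanceAs (Group (ULift.{w} A))
  | false => inferInstanceAs (Group (ULift.{v} B))

/-- The inclusion of a member of `BoolFamily A B` into the free product of `A` and `B`. -/
def boolFamilyToCoprod : ∀ b : Bool, BoolFamily A B b →* Coprod A B
  | true => Coprod.inl.comp MulEquiv.ulift.toMonoidHom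
  | false => Coprod.inr.comp MulEquiv.ulift.toMonoidHom

/-- The comparison map from the binary to the indexed free product. -/
def coprodToCoprodI : Coprod A B →* CoprodI (BoolFamily A B) :=
  Coprod.lift
    ((CoprodI.of (i := true)).comp (MulEquiv.ulift.{v, w} (α := A)).symm.toMonoidHom)
    ((CoprodI.of (i := false)).comp (MulEquiv.ulift.{w, v} (α := B)).symm.toMonoidHom)

theorem lift_boolFamilyToCoprod_coprodToCoprodI (x : Coprod A B) :
    CoprodI.lift boolFamilyToCoprod (coprodToCoprodI x) = x := by
  suffices h : (CoprodI.lift boolFamilyToCoprod).comp coprodToCoprodI = MonoidHom.id (Coprod A B)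
    from DFunLike.congr_fun h x
  apply Coprod.hom_ext
  · ext a
    exact CoprodI.lift_of boolFamilyToCoprod (i := true) (ULift.up a)
  · ext b
    exact CoprodI.lift_of boolFamilyToCoprod (i := false) (ULift.up b)

theorem exists_isConj_inl_or_inr_of_isOfFinOrder {x : Coprod A B} (hx : IsOfFinOrder x) :
    (∃ a : A, IsConj (Coprod.inl a) x) ∨ ∃ b : B, IsConj (Coprod.inr b) x := by
  obtain ⟨i, m, hm⟩ := exists_isConj_of_of_isOfFinOrder (coprodToCoprodI.isOfFinOrder hx)
  have hconj : IsConj (boolFamilyToCoprod i m) x := by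
    simpa only [CoprodI.lift_of, lift_boolFamilyToCoprod_coprodToCoprodI] using
      (CoprodI.lift boolFamilyToCoprod).map_isConj hm
  cases i with
  | true => exact .inl ⟨_, hconj⟩
  | false => exact .inr ⟨_, hconj⟩

theorem fst_eq_one_or_snd_eq_one_of_isOfFinOrder {x : Coprod A B} (hx : IsOfFinOrder x) :
    Coprod.fst x = 1 ∨ Coprod.snd x = 1 := by
  rcases exists_isConj_inl_or_inr_of_isOfFinOrder hx with ⟨a, ha⟩ | ⟨b, hb⟩
  · refine .inr (isConj_one_right.1 ?_)
    simpa only [Coprod.snd_apply_inl] using Coprod.snd.map_isConj ha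
  · refine .inl (isConj_one_right.1 ?_)
    simpa only [Coprod.fst_apply_inr] using Coprod.fst.map_isConj hb

theorem eq_one_of_isOfFinOrder_of_fst_eq_one_of_snd_eq_one {x : Coprod A B} (hx : IsOfFinOrder x)
    (hfst : Coprod.fst x = 1) (hsnd : Coprod.snd x = 1) : x = 1 := by
  rcases exists_isConj_inl_or_inr_of_isOfFinOrder hx with ⟨a, ha⟩ | ⟨b, hb⟩
  · obtain rfl : a = 1 := by simpa [hfst] using Coprod.fst.map_isConj ha
    exact isConj_one_right.1 (by simpa only [map_one] using ha)
  · obtain rfl : b = 1 := by simpa [hsnd] using Coprod.snd.map_isConj hb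
    exact isConj_one_right.1 (by simpa only [map_one] using hb)

variable {H K : Type*} [Group H] [Group K]

theorem fst_comp_eq_one_or_snd_comp_eq_one (hH : IsMulTorsion H) (f : H →* Coprod A B) :
    Coprod.fst.comp f = 1 ∨ Coprod.snd.comp f = 1 := by
  by_contra! ⟨hfst, hsnd⟩
  obtain ⟨x, hx : Coprod.fst (f x) ≠ 1⟩ := DFunLike.ne_iff.1 hfst
  obtain ⟨y, hy : Coprod.snd (f y) ≠ 1⟩ := DFunLike.ne_iff.1 hsnd
  have hdichotomy (z : H) : Coprod.fst (f z) = 1 ∨ Coprod.snd (f z) = 1 :=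
    fst_eq_one_or_snd_eq_one_of_isOfFinOrder (f.isOfFinOrder (hH z))
  have hx' := (hdichotomy x).resolve_left hx
  have hy' := (hdichotomy y).resolve_right hy
  rcases hdichotomy (x * y) with h | h
  · exact hx (by simpa [hy'] using h)
  · exact hy (by simpa [hx'] using h)

theorem snd_comp_eq_one_of_commute [Nontrivial H] (hH : IsMulTorsion H) (hK : IsMulTorsion K)
    {f : H →* Coprod A B} {g : K →* Coprod A B} (hf : Function.Injective f)
    (hcomm : ∀ x y, Commute (f x) (g y)) (hsnd : Coprod.snd.comp f = 1) :
    Coprod.snd.comp g = 1 := by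
  have hHK : IsMulTorsion (H × K) := fun z ↦ (hH z.1).prod_mk (hK z.2)
  rcases fst_comp_eq_one_or_snd_comp_eq_one hHK (f.noncommCoprod g hcomm) with h | h
  · obtain ⟨x, hx⟩ := exists_ne (1 : H)
    have hfst : Coprod.fst (f x) = 1 := by simpa using DFunLike.congr_fun h (x, 1)
    have hfx := eq_one_of_isOfFinOrder_of_fst_eq_one_of_snd_eq_one (f.isOfFinOrder (hH x)) hfst
      (DFunLike.congr_fun hsnd x)
    exact absurd (hf (hfx.trans f.map_one.symm)) hx
  · ext y
    simpa using DFunLike.congr_fun h (1, y)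

theorem forall_fst_comp_eq_one_or_forall_snd_comp_eq_one {V : Type*} {Γ : SimpleGraph V}
    (hΓ : Γ.Preconnected) {G : V → Type*} [∀ v, Group (G v)] [∀ v, Nontrivial (G v)]
    (hG : ∀ v, IsMulTorsion (G v)) {f : ∀ v, G v →* Coprod A B}
    (hf : ∀ v, Function.Injective (f v))
    (hcomm : ∀ v w, Γ.Adj v w → ∀ a b, Commute (f v a) (f w b)) :
    (∀ v, Coprod.fst.comp (f v) = 1) ∨ ∀ v, Coprod.snd.comp (f v) = 1 := by
  by_cases hsnd : ∃ v, Coprod.snd.comp (f v) = 1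
  · obtain ⟨v, hv⟩ := hsnd
    refine .inr fun w ↦ ?_
    obtain ⟨p⟩ := hΓ v w
    induction p with
    | nil => exact hv
    | cons hadj _ ih =>
      exact ih (snd_comp_eq_one_of_commute (hG _) (hG _) (hf _) (hcomm _ _ hadj) hv)
  · exact .inl fun v ↦
      (fst_comp_eq_one_or_snd_comp_eq_one (hG v) (f v)).resolve_right fun h ↦ hsnd ⟨v, h⟩

end BinaryCoproduct

namespace GraphProduct

variable {V : Type*} {Γ : SimpleGraph V} {G : V → Type u} [∀ v, Group (G v)]

variable (Γ G) in
/-- The inclusion of a vertex group into the graph product. -/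
def of (v : V) : G v →* GraphProduct Γ G :=
  (QuotientGroup.mk' (graphProductRels Γ G)).comp CoprodI.of

theorem of_commute {v w : V} (h : Γ.Adj v w) (a : G v) (b : G w) :
    Commute (of Γ G v a) (of Γ G w b) := by
  have hrel : QuotientGroup.mk' (graphProductRels Γ G) (CoprodI.of a * CoprodI.of b *
      (CoprodI.of a)⁻¹ * (CoprodI.of b)⁻¹) = 1 :=
    (QuotientGroup.eq_one_iff _).2 (Subgroup.subset_normalClosure ⟨v, w, a, b, h, rfl⟩)
  simp only [map_mul, map_inv] at hrel
  exact mul_inv_eq_iff_eq_mul.1 (mul_inv_eq_one.1 hrel)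

variable {H : Type*} [Group H]

theorem hom_ext {f g : GraphProduct Γ G →* H}
    (h : ∀ v, f.comp (of Γ G v) = g.comp (of Γ G v)) : f = g :=
  QuotientGroup.monoidHom_ext _ (CoprodI.ext_hom _ _ h)

/-- The homomorphism out of a graph product induced by homomorphisms out of the vertex groups whose
images commute along edges. -/
def lift (f : ∀ v, G v →* H) (hf : ∀ v w, Γ.Adj v w → ∀ a b, Commute (f v a) (f w b)) :
    GraphProduct Γ G →* H :=
  QuotientGroup.lift (graphProductRels Γ G) (CoprodI.lift f) <| by
    refine Subgroup.normalClosure_le_normal ?_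
    rintro _ ⟨v, w, a, b, hvw, rfl⟩
    simp [(hf v w hvw a b).eq]

theorem lift_of (f : ∀ v, G v →* H) (hf : ∀ v w, Γ.Adj v w → ∀ a b, Commute (f v a) (f w b))
    (v : V) (a : G v) : lift f hf (of Γ G v a) = f v a :=
  CoprodI.lift_of f a

theorem of_injective (v : V) : Function.Injective (of Γ G v) := by
  classical
  let f : GraphProduct Γ G →* ∀ v, G v := lift (MonoidHom.mulSingle G)
    fun _ _ hvw a b ↦ Pi.mulSingle_commute hvw.ne a b
  have hf : f ∘ of Γ G v = Pi.mulSingle v := funext (lift_of _ _ v)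
  exact .of_comp (f := f) (hf ▸ Pi.mulSingle_injective v)

theorem fst_comp_eq_one_or_snd_comp_eq_one {A : Type v} {B : Type w} [Group A] [Group B]
    (hΓ : Γ.Preconnected) [∀ v, Nontrivial (G v)] (hG : ∀ v, IsMulTorsion (G v))
    {φ : GraphProduct Γ G →* Coprod A B} (hφ : Function.Injective φ) :
    Coprod.fst.comp φ = 1 ∨ Coprod.snd.comp φ = 1 :=
  (forall_fst_comp_eq_one_or_forall_snd_comp_eq_one hΓ hG (f := fun v ↦ φ.comp (of Γ G v))
    (fun v ↦ hφ.comp (of_injective v)) fun _ _ hvw a b ↦ (of_commute hvw a b).map φ).imp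
    (fun h ↦ hom_ext h) fun h ↦ hom_ext h

end GraphProduct

theorem ne_one_of_surjective {H K : Type*} [MulOneClass H] [MulOneClass K] [Nontrivial K]
    {f : H →* K} (hf : Function.Surjective f) : f ≠ 1 := by
  rintro rfl
  obtain ⟨y, hy⟩ := exists_ne (1 : K)
  obtain ⟨x, rfl⟩ := hf y
  exact hy rfl

theorem graph_product_connected_primary_freely_indecomposable_general {V : Type*}
    (Γ : SimpleGraph V) (hconn : Γ.Connected) (G : V → Type u) [∀ v, Group (G v)]
    [∀ v, Nontrivial (G v)] (htors : ∀ v, IsMulTorsion (G v)) :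
    FreelyIndecomposable (GraphProduct Γ G) := by
  obtain ⟨v⟩ := hconn.nonempty
  refine ⟨(GraphProduct.of_injective (Γ := Γ) v).nontrivial, fun A B _ _ hA hB ↦ ⟨fun e ↦ ?_⟩⟩
  let φ : GraphProduct Γ G →* Coprod A B := e.toMonoidHom
  have hφ : Function.Surjective φ := e.surjective
  rcases GraphProduct.fst_comp_eq_one_or_snd_comp_eq_one hconn.preconnected htors
    (φ := φ) e.injective with h | h
  · exact ne_one_of_surjective (f := Coprod.fst.comp φ) (Coprod.fst_surjective.comp hφ) h
  · exact ne_one_of_surjective (f := Coprod.snd.comp φ) (Coprod.snd_surjective.comp hφ) h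

/-- A primary cyclic group: one isomorphic to `ℤ/p^k` for a prime `p` and `k ≥ 1`. -/
def IsPrimaryCyclic (H : Type*) [Group H] : Prop :=
  ∃ p k : ℕ, p.Prime ∧ 1 ≤ k ∧ Nonempty (H ≃* Multiplicative (ZMod (p ^ k)))

namespace IsPrimaryCyclic

variable {H : Type*} [Group H]

theorem nontrivial (h : IsPrimaryCyclic H) : Nontrivial H := by
  obtain ⟨p, k, hp, hk, ⟨e⟩⟩ := h
  have : Fact (1 < p ^ k) := ⟨Nat.one_lt_pow (by lia) hp.one_lt⟩
  exact e.toEquiv.nontrivial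

theorem isMulTorsion (h : IsPrimaryCyclic H) : IsMulTorsion H := by
  obtain ⟨p, k, hp, -, ⟨e⟩⟩ := h
  have : NeZero (p ^ k) := ⟨pow_ne_zero k hp.ne_zero⟩
  have : Finite H := .of_equiv _ e.symm.toEquiv
  exact isMulTorsion_of_finite

end IsPrimaryCyclic

/-- A graph product over a connected finite graph of nontrivial primary cyclic
groups (of prime power order) is freely indecomposable. -/
theorem graph_product_connected_primary_freely_indecomposable {V : Type*}
    [Fintype V] (Γ : SimpleGraph V) (hconn : Γ.Connected)
    (G : V → Type u) [∀ v, Group (G v)]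
    (hprim : ∀ v : V, ∃ p k : ℕ, p.Prime ∧ 1 ≤ k ∧
      Nonempty (G v ≃* Multiplicative (ZMod (p ^ k)))) :
    FreelyIndecomposable (GraphProduct Γ G) := by
  have (v : V) : Nontrivial (G v) := IsPrimaryCyclic.nontrivial (hprim v)
  exact graph_product_connected_primary_freely_indecomposable_general Γ hconn G fun v ↦
    IsPrimaryCyclic.isMulTorsion (hprim v)
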